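/- For every integer n ≥ 8 there exists a connected locally nonforesty graph of order n whose size equals p(n), where p(n) = 2n − 1 − ⌊n/4⌋ if n ≡ 0 or 3 (mod 4), and p(n) = 2n − ⌊n/4⌋ otherwise. Consequently, the minimum size of a connected locally nonforesty graph of order n is exactly p(n). -/

import Mathlib

/-- A graph `G` is locally nonforesty if for every vertex `v`, the subgraph induced by
the neighborhood of `v` contains a cycle (i.e., is not acyclic). -/
def LocallyNonforesty {V : Type*} (G : SimpleGraph V) : Prop :=
  ∀ v : V, ¬ (G.induce (G.neighborSet v)).IsAcyclic

/-!
For a set `T` of vertices spanning `e(T)` edges consider the excess `φ(T) = 4 e(T) - 7 |T| + 4`,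
which vanishes on 4-cliques. Adding to `T` a 4-clique that meets `T` without being contained in it
raises `φ` by at least 3; adding a disjoint 4-clique joined to `T` by `d ≥ 1` edges raises it by
`4 (d - 1)`. Hence, as soon as all vertices outside `T` lie in 4-cliques and the graph is
connected, `φ(univ)` equals `φ(T)` or exceeds it by at least 3.

If every vertex lies in a 4-clique, start from a 4-clique: `φ(univ) = 0` or `φ(univ) ≥ 3`.
Otherwise start from a minimal set `T` that contains the set `U` of vertices in no 4-clique,
contains each 4-clique it meets, and still contains a cycle in the neighborhood of every `u ∈ U`.
Such a cycle has at least 4 vertices, so vertices of `U` have degree at least 4 in `T`, while by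
minimality each class of overlapping 4-cliques in `T` sends at least 2 edges to the rest of `T`;
together these give `φ(T) ≥ 4`. So `φ(univ) ∈ {0, 3, 4, …}` in all cases, which modulo 4 is the
claimed bound. It is attained by two overlapping 4-cliques to which further 4-cliques are attached
by single edges.
-/

open Finset

section Interedges

variable {V : Type*} {G : SimpleGraph V} [DecidableRel G.Adj] {s t : Finset V}

lemma card_interedges_comm (s t : Finset V) : #(G.interedges s t) = #(G.interedges t s) :=
  have := G.symm
  Rel.card_interedges_comm s t

lemma card_interedges_union_left [DecidableEq V] (h : Disjoint s t) (r : Finset V) :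
    #(G.interedges (s ∪ t) r) = #(G.interedges s r) + #(G.interedges t r) := by
  rw [← card_union_of_disjoint (G.interedges_disjoint_left h r)]
  congr 1
  ext x
  simp only [SimpleGraph.mem_interedges_iff, mem_union]
  tauto

lemma card_interedges_union_right [DecidableEq V] (h : Disjoint s t) (r : Finset V) :
    #(G.interedges r (s ∪ t)) = #(G.interedges r s) + #(G.interedges r t) := by
  rw [card_interedges_comm, card_interedges_union_left h, card_interedges_comm s,
    card_interedges_comm t]

lemma card_interedges_union_self [DecidableEq V] (h : Disjoint s t) :
    #(G.interedges (s ∪ t) (s ∪ t)) =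
      #(G.interedges s s) + 2 * #(G.interedges s t) + #(G.interedges t t) := by
  rw [card_interedges_union_left h, card_interedges_union_right h, card_interedges_union_right h,
    card_interedges_comm t s]
  ring

lemma card_interedges_of_forall_adj (h : ∀ a ∈ s, ∀ b ∈ t, G.Adj a b) :
    #(G.interedges s t) = #s * #t := by
  rw [SimpleGraph.interedges_def, filter_true_of_mem, card_product]
  simpa only [mem_product, and_imp, Prod.forall] using fun a b ha hb ↦ h a ha b hb

lemma card_interedges_self_of_isClique (h : G.IsClique s) :
    #(G.interedges s s) = #s * (#s - 1) := by
  classical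
  have hoff : G.interedges s s = s.offDiag := by
    ext ⟨a, b⟩
    simp only [SimpleGraph.mk_mem_interedges_iff, mem_offDiag]
    exact ⟨fun ⟨ha, hb, hab⟩ ↦ ⟨ha, hb, hab.ne⟩, fun ⟨ha, hb, hab⟩ ↦ ⟨ha, hb, h ha hb hab⟩⟩
  rw [hoff, offDiag_card, Nat.mul_sub_one]

lemma mul_card_le_card_interedges {k : ℕ} (h : ∀ u ∈ s, k ≤ #{v ∈ t | G.Adj u v}) :
    k * #s ≤ #(G.interedges s t) := by
  calc k * #s = ∑ _u ∈ s, k := by rw [sum_const, smul_eq_mul, mul_comm]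
    _ ≤ ∑ u ∈ s, #{v ∈ t | G.Adj u v} := sum_le_sum h
    _ = #(G.interedges s t) := by
      simp only [SimpleGraph.interedges_def, card_filter, sum_product]

end Interedges

section Clique

variable {V W : Type*} {G H : SimpleGraph V} {k : ℕ} {v : V}

/-- The vertex `v` lies in a `k`-clique of `G`. -/
def InClique (G : SimpleGraph V) (k : ℕ) (v : V) : Prop :=
  ∃ Q, G.IsNClique k Q ∧ v ∈ Q

lemma InClique.mono (h : G ≤ H) : InClique G k v → InClique H k v
  | ⟨Q, hQ, hv⟩ => ⟨Q, hQ.mono h, hv⟩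

lemma InClique.map {G' : SimpleGraph W} (f : G ↪g G') :
    InClique G k v → InClique G' k (f v)
  | ⟨Q, hQ, hv⟩ => ⟨Q.map f.toEmbedding,
      hQ.map.mono (SimpleGraph.map_le_iff_le_comap _ _ _ |>.2 f.comap_eq.ge),
      mem_map_of_mem f.toEmbedding hv⟩

lemma not_isAcyclic_induce_neighborSet (hk : 4 ≤ k) (h : InClique G k v) :
    ¬ (G.induce (G.neighborSet v)).IsAcyclic := by
  classical
  obtain ⟨Q, hQ, hv⟩ := h
  intro hacyc
  have hfree := (G.cliqueFree_induce_iff _ _).1 (hacyc.cliqueFree (show 3 ≤ k - 1 by omega))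
  refine hfree (fun w hw ↦ ?_) (hQ.erase_of_mem hv)
  obtain ⟨hwv, hwQ⟩ := mem_erase.1 hw
  exact hQ.isClique hv hwQ hwv.symm

/-- A set of vertices is `k`-clique closed if it contains every `k`-clique that it meets, that is,
if it is a union of classes of the equivalence relation generated by lying in a common
`k`-clique. -/
def CliqueClosed (G : SimpleGraph V) (k : ℕ) (X : Finset V) : Prop :=
  ∀ ⦃Q⦄, G.IsNClique k Q → ∀ v ∈ Q, v ∈ X → Q ⊆ X

lemma CliqueClosed.sdiff [DecidableEq V] {X C : Finset V} (hX : CliqueClosed G k X)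
    (hC : CliqueClosed G k C) : CliqueClosed G k (X \ C) := by
  intro Q hQ v hvQ hv w hw
  obtain ⟨hvX, hvC⟩ := mem_sdiff.1 hv
  exact mem_sdiff.2 ⟨hX hQ v hvQ hvX hw, fun hwC ↦ hvC (hC hQ w hw hwC hvQ)⟩

end Clique

section Excess

variable {V : Type*} {G : SimpleGraph V} [DecidableRel G.Adj] {T Q : Finset V}

/-- The excess `4 e(T) - 7 |T| + 4`, where `e(T)` is the number of edges of `G` inside `T`. As
`interedges T T` consists of ordered pairs, it counts each of these edges twice. -/
def edgeExcess (G : SimpleGraph V) [DecidableRel G.Adj] (T : Finset V) : ℤ :=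
  2 * #(G.interedges T T) - 7 * #T + 4

lemma edgeExcess_univ [Fintype V] :
    edgeExcess G univ = 4 * G.edgeSet.ncard - 7 * Nat.card V + 4 := by
  have h : #(G.interedges univ univ) = 2 * G.edgeSet.ncard := by
    classical
    rw [← SimpleGraph.coe_edgeFinset, Set.ncard_coe_finset, SimpleGraph.two_mul_card_edgeFinset,
      SimpleGraph.interedges_def, univ_product_univ]
  rw [edgeExcess, h, card_univ, Nat.card_eq_fintype_card]
  push_cast
  ring

lemma edgeExcess_of_isNClique (hQ : G.IsNClique 4 Q) : edgeExcess G Q = 0 := by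
  rw [edgeExcess, card_interedges_self_of_isClique hQ.isClique, hQ.card_eq]
  norm_num

lemma edgeExcess_union [DecidableEq V] {R : Finset V} (h : Disjoint T R) :
    edgeExcess G (T ∪ R) =
      edgeExcess G T + 4 * #(G.interedges T R) + 2 * #(G.interedges R R) - 7 * #R := by
  rw [edgeExcess, edgeExcess, card_interedges_union_self h, card_union_of_disjoint h]
  push_cast
  ring

lemma edgeExcess_union_isNClique [DecidableEq V] (hQ : G.IsNClique 4 Q) (h : Disjoint T Q) :
    edgeExcess G (T ∪ Q) = edgeExcess G T + 4 * (#(G.interedges T Q) - 1) := by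
  rw [edgeExcess_union h, card_interedges_self_of_isClique hQ.isClique, hQ.card_eq]
  push_cast
  ring

lemma edgeExcess_add_three_le_union [DecidableEq V] (hQ : G.IsNClique 4 Q) (hmeet : ¬ Disjoint T Q)
    (hsub : ¬ Q ⊆ T) : edgeExcess G T + 3 ≤ edgeExcess G (T ∪ Q) := by
  have hcross : #(Q ∩ T) * #(Q \ T) ≤ #(G.interedges T (Q \ T)) := by
    rw [← card_interedges_of_forall_adj (G := G) fun a ha b hb ↦ hQ.isClique
      (mem_inter.1 ha).1 (mem_sdiff.1 hb).1
      (ne_of_mem_of_not_mem (mem_inter.1 ha).2 (mem_sdiff.1 hb).2)]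
    exact card_le_card (SimpleGraph.interedges_mono G inter_subset_right Subset.rfl)
  have hinner : #(G.interedges (Q \ T) (Q \ T)) = #(Q \ T) * (#(Q \ T) - 1) :=
    card_interedges_self_of_isClique (hQ.isClique.subset (coe_subset.2 sdiff_subset))
  have hcard : #(Q ∩ T) + #(Q \ T) = 4 := (card_inter_add_card_sdiff Q T).trans hQ.card_eq
  have hpos : 0 < #(Q ∩ T) := by
    rwa [card_pos, ← not_disjoint_iff_nonempty_inter, disjoint_comm]
  have hpos' : 0 < #(Q \ T) := card_pos.2 (sdiff_nonempty.2 hsub)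
  rw [← union_sdiff_self_eq_union, edgeExcess_union disjoint_sdiff, hinner]
  obtain ⟨h1, h2⟩ | ⟨h1, h2⟩ | ⟨h1, h2⟩ :
      (#(Q ∩ T) = 3 ∧ #(Q \ T) = 1) ∨ (#(Q ∩ T) = 2 ∧ #(Q \ T) = 2) ∨
        (#(Q ∩ T) = 1 ∧ #(Q \ T) = 3) := by omega
  all_goals
    rw [h1, h2] at hcross
    rw [h2]
    omega

lemma exists_ssuperset_edgeExcess [Fintype V] (hG : G.Connected) (hT : T.Nonempty)
    (hne : T ≠ univ) (hcov : ∀ v ∉ T, InClique G 4 v) :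
    ∃ T', T ⊂ T' ∧ (edgeExcess G T' = edgeExcess G T ∨ edgeExcess G T + 3 ≤ edgeExcess G T') := by
  classical
  obtain ⟨t, ht⟩ := hT
  obtain ⟨x, hx⟩ : ∃ x, x ∉ T := by simpa only [ne_eq, eq_univ_iff_forall, not_forall] using hne
  obtain ⟨p⟩ := hG.preconnected t x
  obtain ⟨d, -, hd, hd'⟩ := p.exists_boundary_dart T (mem_coe.2 ht) (mem_coe.not.2 hx)
  obtain ⟨Q, hQ, hdQ⟩ := hcov d.snd hd'
  have hsub : ¬ Q ⊆ T := fun h ↦ hd' (h hdQ)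
  refine ⟨T ∪ Q, subset_union_left.ssubset_of_not_subset fun h ↦ hsub (union_subset_right h), ?_⟩
  by_cases hdisj : Disjoint T Q
  · have hpos : 0 < #(G.interedges T Q) :=
      card_pos.2 ⟨(d.fst, d.snd), G.mk_mem_interedges_iff.2 ⟨hd, hdQ, d.adj⟩⟩
    rw [edgeExcess_union_isNClique hQ hdisj]
    omega
  · exact Or.inr (edgeExcess_add_three_le_union hQ hdisj hsub)

lemma edgeExcess_univ_eq_or_add_three_le [Fintype V] (hG : G.Connected) (hT : T.Nonempty)
    (hcov : ∀ v ∉ T, InClique G 4 v) :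
    edgeExcess G univ = edgeExcess G T ∨ edgeExcess G T + 3 ≤ edgeExcess G univ := by
  induction T using WellFoundedGT.induction with
  | ind T ih =>
    by_cases hne : T = univ
    · exact Or.inl (by rw [hne])
    obtain ⟨T', hTT', hT'⟩ := exists_ssuperset_edgeExcess hG hT hne hcov
    have := ih T' hTT' (hT.mono hTT'.subset) fun v hv ↦ hcov v fun h ↦ hv (hTT'.subset h)
    omega

lemma CliqueClosed.exists_subset_edgeExcess_nonneg {X : Finset V} (hX : CliqueClosed G 4 X)
    {x : V} (hx : x ∈ X) (hxQ : InClique G 4 x) :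
    ∃ C ⊆ X, C.Nonempty ∧ CliqueClosed G 4 C ∧ 0 ≤ edgeExcess G C := by
  classical
  obtain ⟨Q, hQ, hxQ⟩ := hxQ
  have hfin : {C | C ⊆ X ∧ 0 ≤ edgeExcess G C}.Finite :=
    X.powerset.finite_toSet.subset fun C hC ↦ mem_coe.2 (mem_powerset.2 hC.1)
  obtain ⟨C, hQC, ⟨hCX, hC⟩, hmax⟩ :=
    hfin.exists_le_maximal ⟨hX hQ x hxQ hx, (edgeExcess_of_isNClique hQ).ge⟩
  refine ⟨C, hCX, ⟨x, hQC hxQ⟩, fun P hP v hvP hvC ↦ ?_, hC⟩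
  by_contra hPC
  have hgrow := edgeExcess_add_three_le_union hP (not_disjoint_iff.2 ⟨v, hvC, hvP⟩) hPC
  exact hPC (union_subset_right (hmax
    ⟨union_subset hCX (hX hP v hvP (hCX hvC)), by omega⟩ subset_union_left))

/-- Split off closed sets `C` one at a time: two boundary edges compensate the constant `4` in
`edgeExcess G C`. -/
lemma CliqueClosed.seven_mul_card_le [DecidableEq V] {X : Finset V} (hX : CliqueClosed G 4 X)
    (hcov : ∀ v ∈ X, InClique G 4 v) (hXT : X ⊆ T)
    (hbdry : ∀ C ⊆ X, C.Nonempty → CliqueClosed G 4 C → 2 ≤ #(G.interedges C (T \ C))) :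
    7 * #X ≤ 2 * #(G.interedges X T) := by
  induction X using Finset.strongInduction with
  | H X ih =>
    obtain rfl | ⟨x, hx⟩ := X.eq_empty_or_nonempty
    · simp
    obtain ⟨C, hCX, hCne, hC, hCpos⟩ := hX.exists_subset_edgeExcess_nonneg hx (hcov x hx)
    have hrest : 7 * #(X \ C) ≤ 2 * #(G.interedges (X \ C) T) :=
      ih (X \ C) (sdiff_ssubset hCX hCne) (hX.sdiff hC) (fun v hv ↦ hcov v (sdiff_subset hv))
        (sdiff_subset.trans hXT) fun D hD ↦ hbdry D (hD.trans sdiff_subset)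
    have hCbdry := hbdry C hCX hCne hC
    have hCT : #(G.interedges C T) = #(G.interedges C C) + #(G.interedges C (T \ C)) := by
      rw [← card_interedges_union_right disjoint_sdiff, union_sdiff_of_subset (hCX.trans hXT)]
    have hXedges : #(G.interedges X T) = #(G.interedges C T) + #(G.interedges (X \ C) T) := by
      rw [← card_interedges_union_left disjoint_sdiff, union_sdiff_of_subset hCX]
    have hXcard : #(X \ C) + #C = #X := card_sdiff_add_card_eq_card hCX
    unfold edgeExcess at hCpos
    omega

end Excess

section Rim

variable {V : Type*} {G : SimpleGraph V} [DecidableRel G.Adj] {u : V} {W : Finset V}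

lemma exists_two_le_card_filter_adj_of_not_isAcyclic (h : ¬ G.IsAcyclic) :
    ∃ W : Finset V, W.Nonempty ∧ ∀ w ∈ W, 2 ≤ #{x ∈ W | G.Adj w x} := by
  classical
  obtain ⟨v, c, hc⟩ : ∃ v, ∃ c : G.Walk v v, c.IsCycle := by
    simpa only [SimpleGraph.IsAcyclic, not_forall, not_not] using h
  refine ⟨c.support.toFinset, ⟨v, List.mem_toFinset.2 c.start_mem_support⟩, fun w hw ↦ ?_⟩
  rw [← hc.ncard_neighborSet_toSubgraph_eq_two (List.mem_toFinset.1 hw), ← Set.ncard_coe_finset]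
  refine Set.ncard_le_ncard (fun x hx ↦ ?_) (finite_toSet _)
  exact mem_coe.2 (mem_filter.2
    ⟨List.mem_toFinset.2 (c.mem_verts_toSubgraph.1 hx.snd_mem), hx.adj_sub⟩)

/-- `W` is a rim of `u` if it is a nonempty set of neighbors of `u` that induces a subgraph of
minimum degree at least two. A cycle in the neighborhood of `u` gives a rim, and only the degree
condition is needed of it. -/
structure IsRim (G : SimpleGraph V) [DecidableRel G.Adj] (u : V) (W : Finset V) : Prop where
  nonempty : W.Nonempty
  adj : ∀ w ∈ W, G.Adj u w
  two_le : ∀ w ∈ W, 2 ≤ #{x ∈ W | G.Adj w x}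

lemma LocallyNonforesty.exists_isRim (hG : LocallyNonforesty G) (u : V) : ∃ W, IsRim G u W := by
  obtain ⟨W, hne, hdeg⟩ := exists_two_le_card_filter_adj_of_not_isAcyclic (hG u)
  refine ⟨W.map (.subtype _), hne.map, fun w hw ↦ ?_, fun w hw ↦ ?_⟩
  · obtain ⟨x, -, rfl⟩ := mem_map.1 hw
    exact x.2
  · obtain ⟨x, hx, rfl⟩ := mem_map.1 hw
    rw [filter_map, card_map]
    exact hdeg x hx

lemma IsRim.four_le_card (hW : IsRim G u W) (hu : ¬ InClique G 4 u) : 4 ≤ #W := by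
  classical
  by_contra! hlt
  have herase : ∀ w ∈ W, {x ∈ W | G.Adj w x} = W.erase w ∧ 3 ≤ #W := by
    intro w hw
    have hsub : {x ∈ W | G.Adj w x} ⊆ W.erase w := fun x hx ↦
      mem_erase.2 ⟨(mem_filter.1 hx).2.ne', (mem_filter.1 hx).1⟩
    have hcard := card_erase_add_one hw
    have hle := card_le_card hsub
    have htwo := hW.two_le w hw
    exact ⟨eq_of_subset_of_card_le hsub (by omega), by omega⟩
  obtain ⟨w, hw⟩ := hW.nonempty
  have hclique : G.IsNClique 3 W := by
    refine ⟨fun a ha b hb hab ↦ ?_, by have := (herase w hw).2; omega⟩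
    have hb' : b ∈ W.erase a := mem_erase.2 ⟨hab.symm, hb⟩
    rw [← (herase a ha).1] at hb'
    exact (mem_filter.1 hb').2
  exact hu ⟨insert u W, hclique.insert hW.adj, mem_insert_self u W⟩

lemma IsRim.two_le_card_interedges [DecidableEq V] {T C : Finset V} (hW : IsRim G u W)
    (hWT : W ⊆ T) (hu : u ∈ T \ C) (hWC : ¬ Disjoint W C) :
    2 ≤ #(G.interedges C (T \ C)) := by
  obtain ⟨w, hw, hwC⟩ := not_disjoint_iff.1 hWC
  obtain ⟨a, ha⟩ : {x ∈ W | G.Adj w x}.Nonempty := card_pos.1 (by have := hW.two_le w hw; omega)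
  obtain ⟨haW, hwa⟩ := mem_filter.1 ha
  have hwu : (w, u) ∈ G.interedges C (T \ C) :=
    G.mk_mem_interedges_iff.2 ⟨hwC, hu, (hW.adj w hw).symm⟩
  by_cases haC : a ∈ C
  · have hau : (a, u) ∈ G.interedges C (T \ C) :=
      G.mk_mem_interedges_iff.2 ⟨haC, hu, (hW.adj a haW).symm⟩
    exact one_lt_card.2 ⟨_, hwu, _, hau, fun h ↦ hwa.ne (congrArg Prod.fst h)⟩
  · have hwa' : (w, a) ∈ G.interedges C (T \ C) :=
      G.mk_mem_interedges_iff.2 ⟨hwC, mem_sdiff.2 ⟨hWT haW, haC⟩, hwa⟩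
    exact one_lt_card.2 ⟨_, hwu, _, hwa', fun h ↦ (hW.adj a haW).ne (congrArg Prod.snd h)⟩

end Rim

section Core

variable {V : Type*} {G : SimpleGraph V} [DecidableRel G.Adj] {T : Finset V}

/-- A core of `G` contains all vertices that lie in no 4-clique, together with a rim of each of
them, and is a union of such vertices and of classes of overlapping 4-cliques. -/
structure IsCore (G : SimpleGraph V) [DecidableRel G.Adj] (T : Finset V) : Prop where
  cliqueClosed : CliqueClosed G 4 T
  mem : ∀ u, ¬ InClique G 4 u → u ∈ T
  exists_isRim : ∀ u, ¬ InClique G 4 u → ∃ W ⊆ T, IsRim G u W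

lemma LocallyNonforesty.isCore_univ [Fintype V] (hG : LocallyNonforesty G) : IsCore G univ where
  cliqueClosed _ _ _ _ _ := subset_univ _
  mem u _ := mem_univ u
  exists_isRim u _ := (hG.exists_isRim u).imp fun W hW ↦ ⟨subset_univ W, hW⟩

lemma IsCore.sdiff [DecidableEq V] {C : Finset V} (hT : IsCore G T) (hC : CliqueClosed G 4 C)
    (hcov : ∀ v ∈ C, InClique G 4 v) (hbdry : #(G.interedges C (T \ C)) < 2) :
    IsCore G (T \ C) := by
  have hmem : ∀ u, ¬ InClique G 4 u → u ∈ T \ C := fun u hu ↦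
    mem_sdiff.2 ⟨hT.mem u hu, fun huC ↦ hu (hcov u huC)⟩
  refine ⟨hT.cliqueClosed.sdiff hC, hmem, fun u hu ↦ ?_⟩
  obtain ⟨W, hWT, hW⟩ := hT.exists_isRim u hu
  have hdisj : Disjoint W C := by
    by_contra h
    have := hW.two_le_card_interedges hWT (hmem u hu) h
    omega
  exact ⟨W, subset_sdiff.2 ⟨hWT, hdisj⟩, hW⟩

lemma IsCore.four_le_card_filter_adj (hT : IsCore G T) {u : V} (hu : ¬ InClique G 4 u) :
    4 ≤ #{v ∈ T | G.Adj u v} := by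
  obtain ⟨W, hWT, hW⟩ := hT.exists_isRim u hu
  exact (hW.four_le_card hu).trans
    (card_le_card fun w hw ↦ mem_filter.2 ⟨hWT hw, hW.adj w hw⟩)

lemma four_le_edgeExcess_of_minimal_isCore (hT : Minimal (IsCore G) T) : 4 ≤ edgeExcess G T := by
  classical
  set X := {v ∈ T | InClique G 4 v}
  set U := {v ∈ T | ¬ InClique G 4 v}
  have hXU : Disjoint X U := disjoint_filter_filter_not T T _
  have hunion : X ∪ U = T := filter_union_filter_not_eq _ T
  have hXclosed : CliqueClosed G 4 X := fun Q hQ v hvQ hvX w hw ↦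
    mem_filter.2 ⟨hT.prop.cliqueClosed hQ v hvQ (mem_filter.1 hvX).1 hw, Q, hQ, hw⟩
  have hbdry : ∀ C ⊆ X, C.Nonempty → CliqueClosed G 4 C → 2 ≤ #(G.interedges C (T \ C)) := by
    intro C hCX hCne hC
    by_contra! hlt
    have hcore := hT.prop.sdiff hC (fun v hv ↦ (mem_filter.1 (hCX hv)).2) hlt
    exact (sdiff_ssubset (hCX.trans (filter_subset _ T)) hCne).not_subset
      (hT.le_of_le hcore sdiff_subset)
  have hXdeg : 7 * #X ≤ 2 * #(G.interedges X T) :=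
    hXclosed.seven_mul_card_le (fun v hv ↦ (mem_filter.1 hv).2) (filter_subset _ T) hbdry
  have hUdeg : 4 * #U ≤ #(G.interedges U T) :=
    mul_card_le_card_interedges fun u hu ↦ hT.prop.four_le_card_filter_adj (mem_filter.1 hu).2
  have hcard : #X + #U = #T := by rw [← card_union_of_disjoint hXU, hunion]
  have hedges : #(G.interedges X T) + #(G.interedges U T) = #(G.interedges T T) := by
    rw [← card_interedges_union_left hXU, hunion]
  unfold edgeExcess
  omega

lemma LocallyNonforesty.edgeExcess_univ_eq_zero_or_three_le [Fintype V]
    (hLN : LocallyNonforesty G) (hG : G.Connected) :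
    edgeExcess G univ = 0 ∨ 3 ≤ edgeExcess G univ := by
  classical
  by_cases hcov : ∀ v, InClique G 4 v
  · obtain ⟨v⟩ := hG.nonempty
    obtain ⟨Q, hQ, hvQ⟩ := hcov v
    simpa only [edgeExcess_of_isNClique hQ, zero_add] using
      edgeExcess_univ_eq_or_add_three_le hG ⟨v, hvQ⟩ fun v _ ↦ hcov v
  · obtain ⟨u, hu⟩ := not_forall.1 hcov
    obtain ⟨T, -, hT⟩ := Finite.exists_le_minimal hLN.isCore_univ
    have hTexcess := four_le_edgeExcess_of_minimal_isCore hT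
    have := edgeExcess_univ_eq_or_add_three_le hG ⟨u, hT.prop.mem u hu⟩ fun v hv ↦
      not_not.1 (mt (hT.prop.mem v) hv)
    omega

lemma LocallyNonforesty.card_edgeSet_bound {V : Type*} [Finite V] {G : SimpleGraph V}
    (hLN : LocallyNonforesty G) (hG : G.Connected) :
    4 * G.edgeSet.ncard + 4 = 7 * Nat.card V ∨ 7 * Nat.card V ≤ 4 * G.edgeSet.ncard + 1 := by
  classical
  have := Fintype.ofFinite V
  have h := hLN.edgeExcess_univ_eq_zero_or_three_le hG
  rw [edgeExcess_univ] at h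
  omega

end Core

section Construction

variable {V W : Type*} {m m' : ℕ}

lemma ncard_edgeSet_sup_edge [Finite V] {G : SimpleGraph V} {a b : V} (hab : a ≠ b)
    (hadj : ¬ G.Adj a b) : (G ⊔ SimpleGraph.edge a b).edgeSet.ncard = G.edgeSet.ncard + 1 := by
  rw [SimpleGraph.edgeSet_sup, SimpleGraph.edgeSet_edge_of_ne hab, Set.union_singleton,
    Set.ncard_insert_of_notMem (G.mem_edgeSet.not.2 hadj)]

lemma ncard_edgeSet_sum [Finite V] [Finite W] (G : SimpleGraph V) (H : SimpleGraph W) :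
    (G ⊕g H).edgeSet.ncard = G.edgeSet.ncard + H.edgeSet.ncard := by
  simp only [← Nat.card_coe_set_eq, Nat.card_congr SimpleGraph.edgeSetSumEquiv, Nat.card_sum]

/-- `m` is the number of edges of some connected graph on `V` all of whose vertices lie in
4-cliques; the extremal graphs are built within this class. -/
def IsCliqueCoverSize (V : Type*) (m : ℕ) : Prop :=
  ∃ G : SimpleGraph V, G.Connected ∧ (∀ v, InClique G 4 v) ∧ G.edgeSet.ncard = m

lemma IsCliqueCoverSize.congr (e : V ≃ W) : IsCliqueCoverSize V m → IsCliqueCoverSize W m := by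
  rintro ⟨G, hG, hcov, rfl⟩
  let f : G ≃g G.map e.toEmbedding := SimpleGraph.Iso.map e G
  refine ⟨_, f.connected_iff.1 hG, fun w ↦ ?_, (Set.ncard_congr' f.mapEdgeSet).symm⟩
  simpa using (hcov (f.symm w)).map f.toEmbedding

lemma IsCliqueCoverSize.sum [Finite V] [Finite W] :
    IsCliqueCoverSize V m → IsCliqueCoverSize W m' → IsCliqueCoverSize (V ⊕ W) (m + m' + 1) := by
  rintro ⟨G, hG, hGcov, rfl⟩ ⟨H, hH, hHcov, rfl⟩
  obtain ⟨v⟩ := hG.nonempty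
  obtain ⟨w⟩ := hH.nonempty
  refine ⟨(G ⊕g H) ⊔ SimpleGraph.edge (Sum.inl v) (Sum.inr w), hG.sum_sup_edge hH, ?_, ?_⟩
  · rintro (x | x)
    · exact ((hGcov x).map SimpleGraph.Embedding.sumInl).mono le_sup_left
    · exact ((hHcov x).map SimpleGraph.Embedding.sumInr).mono le_sup_left
  · rw [ncard_edgeSet_sup_edge Sum.inl_ne_inr (SimpleGraph.not_adj_sum_inl_inr v w),
      ncard_edgeSet_sum]

/-- Two 4-cliques, on the first four and on the last four vertices, sharing `4 - j` vertices when
`j ≤ 4`. -/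
def overlappingCliques (j : ℕ) : SimpleGraph (Fin (4 + j)) where
  Adj a b := a ≠ b ∧ (a.val < 4 ∧ b.val < 4 ∨ j ≤ a.val ∧ j ≤ b.val)
  symm := ⟨by grind⟩
  loopless := ⟨by grind⟩

instance (j : ℕ) : DecidableRel (overlappingCliques j).Adj :=
  fun a b ↦ inferInstanceAs
    (Decidable (a ≠ b ∧ (a.val < 4 ∧ b.val < 4 ∨ j ≤ a.val ∧ j ≤ b.val)))

lemma overlappingCliques_connected {j : ℕ} (hj : j < 4) : (overlappingCliques j).Connected := by
  rw [SimpleGraph.connected_iff_exists_forall_reachable]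
  refine ⟨⟨3, by omega⟩, fun v ↦ ?_⟩
  by_cases hv : (⟨3, by omega⟩ : Fin (4 + j)) = v
  · exact hv ▸ SimpleGraph.Reachable.rfl
  · refine SimpleGraph.Adj.reachable ⟨hv, ?_⟩
    simp only
    omega

lemma inClique_overlappingCliques {j : ℕ} (hj : j ≤ 4) (v : Fin (4 + j)) :
    InClique (overlappingCliques j) 4 v := by
  obtain hv | hv : v.val < 4 ∨ j ≤ v.val := by omega
  · refine ⟨univ.filter fun a : Fin (4 + j) ↦ a.val < 4, ⟨fun a ha b hb hab ↦ ⟨hab, .inl ?_⟩, ?_⟩,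
      mem_filter.2 ⟨mem_univ v, hv⟩⟩
    · exact ⟨(mem_filter.1 ha).2, (mem_filter.1 hb).2⟩
    · interval_cases j <;> rfl
  · refine ⟨univ.filter fun a : Fin (4 + j) ↦ j ≤ a.val, ⟨fun a ha b hb hab ↦ ⟨hab, .inr ?_⟩, ?_⟩,
      mem_filter.2 ⟨mem_univ v, hv⟩⟩
    · exact ⟨(mem_filter.1 ha).2, (mem_filter.1 hb).2⟩
    · interval_cases j <;> rfl

lemma ncard_edgeSet_overlappingCliques {j : ℕ} (hj : j ≤ 4) :
    (overlappingCliques j).edgeSet.ncard = 12 - (4 - j).choose 2 := by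
  rw [← SimpleGraph.coe_edgeFinset, Set.ncard_coe_finset]
  interval_cases j <;> decide

lemma isCliqueCoverSize_fin {j : ℕ} (hj : j < 4) (k : ℕ) :
    IsCliqueCoverSize (Fin (4 + j + 4 * k)) (12 - (4 - j).choose 2 + 7 * k) := by
  have hbase {i : ℕ} (hi : i < 4) : IsCliqueCoverSize (Fin (4 + i)) (12 - (4 - i).choose 2) :=
    ⟨overlappingCliques i, overlappingCliques_connected hi, inClique_overlappingCliques hi.le,
      ncard_edgeSet_overlappingCliques hi.le⟩
  induction k with
  | zero => exact hbase hj
  | succ k ih =>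
    exact (ih.sum (hbase four_pos)).congr (finSumFinEquiv (m := 4 + j + 4 * k) (n := 4))

end Construction

theorem stmt_13_general {V : Type*} {n : ℕ} (hn : 4 ≤ n) (hV : Nat.card V = n) :
    IsLeast {m : ℕ | ∃ G : SimpleGraph V,
        G.Connected ∧ LocallyNonforesty G ∧ G.edgeSet.ncard = m}
      (if n % 4 = 0 ∨ n % 4 = 3 then 2 * n - 1 - n / 4 else 2 * n - n / 4) := by
  have : Finite V := Nat.finite_of_card_ne_zero (by omega)
  constructor
  · obtain ⟨k, j, hj, rfl⟩ : ∃ k j, j < 4 ∧ n = 4 + j + 4 * k :=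
      ⟨n / 4 - 1, n % 4, by omega, by omega⟩
    obtain ⟨G, hG, hcov, hsize⟩ :=
      (isCliqueCoverSize_fin hj k).congr (Finite.equivFinOfCardEq hV).symm
    refine ⟨G, hG, fun v ↦ not_isAcyclic_induce_neighborSet le_rfl (hcov v), hsize.trans ?_⟩
    interval_cases j <;> simp only [Nat.choose] <;> split_ifs <;> omega
  · rintro m ⟨G, hG, hLN, rfl⟩
    have := hLN.card_edgeSet_bound hG
    split_ifs <;> omega

/-- `p n` is the least possible size: it is attained by some connected locally
nonforesty graph of order `n`, and it is a lower bound for the sizes of all such graphs. -/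
theorem stmt_13 (n : ℕ) (h8 : 8 ≤ n) :
    IsLeast {m : ℕ | ∃ G : SimpleGraph (Fin n),
        G.Connected ∧ LocallyNonforesty G ∧ G.edgeSet.ncard = m}
      (if n % 4 = 0 ∨ n % 4 = 3 then 2 * n - 1 - n / 4 else 2 * n - n / 4) :=
  stmt_13_general (by omega) (Nat.card_fin n)
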